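/- Let n be a positive integer and let S = {S_k ≤ Sym({1,…,m_k})}_{k=1,…,n} be a finite sequence of finite perfect transitive permutation groups such that for every k ∈ {1,…,n} there exist two generators a_k, b_k of S_k satisfying: (i) each of a_k and b_k fixes at least one point of {1,…,m_k}; (ii) the orders of a_1 and b_j are coprime and the orders of b_1 and a_j are coprime for every j ∈ {2,…,n}. Then the iterated exponentiation S̃_n is generated by 2 elements. -/

import Mathlib

open Equiv

/-- The product-action permutation of `β → α` induced by `a : β → Perm α` and `b : Perm β`. -/
def prodPerm {α β : Type} (a : β → Perm α) (b : Perm β) : Perm (β → α) where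
  toFun x := fun i => a i (x (b⁻¹ i))
  invFun x := fun i => (a (b i))⁻¹ (x (b i))
  left_inv x := by funext i; simp
  right_inv x := by funext i; simp

@[simp] theorem prodPerm_apply {α β : Type} (a : β → Perm α) (b : Perm β) (x : β → α) (i : β) :
    prodPerm a b x i = a i (x (b⁻¹ i)) := rfl

theorem prodPerm_one {α β : Type} :
    prodPerm (fun _ : β => (1 : Perm α)) 1 = 1 := by
  apply Equiv.ext; intro x; funext i; simp

theorem prodPerm_mul {α β : Type} (a a' : β → Perm α) (b b' : Perm β) :
    prodPerm a b * prodPerm a' b' = prodPerm (fun i => a i * a' (b⁻¹ i)) (b * b') := by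
  apply Equiv.ext; intro x; funext i
  simp [Perm.mul_apply, mul_inv_rev]

theorem prodPerm_inv {α β : Type} (a : β → Perm α) (b : Perm β) :
    (prodPerm a b)⁻¹ = prodPerm (fun i => (a (b i))⁻¹) b⁻¹ := by
  apply Equiv.ext; intro x; funext i
  simp [prodPerm, Perm.inv_def]

/-- The exponentiation `A ⟨≀⟩ B` of permutation groups, as a subgroup of `Perm (β → α)`
acting by the product action. -/
def expWr {α β : Type} (A : Subgroup (Perm α)) (B : Subgroup (Perm β)) :
    Subgroup (Perm (β → α)) where
  carrier := {π | ∃ (a : β → Perm α) (b : Perm β),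
    (∀ i, a i ∈ A) ∧ b ∈ B ∧ π = prodPerm a b}
  one_mem' := ⟨fun _ => 1, 1, fun _ => A.one_mem, B.one_mem, prodPerm_one.symm⟩
  mul_mem' := by
    rintro π π' ⟨a, b, ha, hb, rfl⟩ ⟨a', b', ha', hb', rfl⟩
    exact ⟨fun i => a i * a' (b⁻¹ i), b * b',
      fun i => A.mul_mem (ha i) (ha' _), B.mul_mem hb hb', prodPerm_mul a a' b b'⟩
  inv_mem' := by
    rintro π ⟨a, b, ha, hb, rfl⟩
    exact ⟨fun i => (a (b i))⁻¹, b⁻¹,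
      fun i => A.inv_mem (ha _), B.inv_mem hb, prodPerm_inv a b⟩

/-- A bundled permutation group: a set together with a subgroup of its permutation group. -/
structure PermGroup where
  carrier : Type
  grp : Subgroup (Perm carrier)

/-- Exponentiation of bundled permutation groups. -/
def ExpP (A B : PermGroup) : PermGroup :=
  ⟨B.carrier → A.carrier, expWr A.grp B.grp⟩

/-- Iterated exponentiation of a sequence of permutation groups:
`S̃ 0 = S 0` and `S̃ (k+1) = S (k+1) ⟨≀⟩ S̃ k`. -/
def iterExpP (S : ℕ → PermGroup) : ℕ → PermGroup
  | 0 => S 0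
  | k + 1 => ExpP (S (k + 1)) (iterExpP S k)

/-- `π'` in `A ⟨≀⟩ P` projects to `π` in `P`. -/
def IsLift {A P : PermGroup} (π' : (ExpP A P).grp) (π : P.grp) : Prop :=
  ∃ a : P.carrier → Perm A.carrier, (∀ i, a i ∈ A.grp) ∧
    (π' : Perm (ExpP A P).carrier) = prodPerm a (π : Perm P.carrier)

theorem IsLift.one {A P : PermGroup} : IsLift (A := A) (P := P) 1 1 :=
  ⟨fun _ => 1, fun _ => A.grp.one_mem, by
    simp only [OneMemClass.coe_one]
    exact prodPerm_one.symm⟩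

theorem IsLift.mul {A P : PermGroup} {π₁ π₂ : (ExpP A P).grp} {ρ₁ ρ₂ : P.grp}
    (h₁ : IsLift π₁ ρ₁) (h₂ : IsLift π₂ ρ₂) : IsLift (π₁ * π₂) (ρ₁ * ρ₂) := by
  obtain ⟨a, ha, hEq⟩ := h₁
  obtain ⟨a', ha', hEq'⟩ := h₂
  exact ⟨fun i => a i * a' ((ρ₁ : Perm P.carrier)⁻¹ i),
    fun i => A.grp.mul_mem (ha i) (ha' _), by
      push_cast [hEq, hEq']
      exact prodPerm_mul a a' _ _⟩

theorem IsLift.inv {A P : PermGroup} {π₁ : (ExpP A P).grp} {ρ₁ : P.grp}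
    (h₁ : IsLift π₁ ρ₁) : IsLift π₁⁻¹ ρ₁⁻¹ := by
  obtain ⟨a, ha, hEq⟩ := h₁
  exact ⟨fun i => (a ((ρ₁ : Perm P.carrier) i))⁻¹,
    fun i => A.grp.inv_mem (ha _), by
      push_cast [hEq]
      exact prodPerm_inv a _⟩

/-- The inverse limit of the iterated exponentiations, realised as the subgroup of
compatible sequences in the product of all the finite levels. -/
def iterLimit (S : ℕ → PermGroup) : Subgroup (∀ k, (iterExpP S k).grp) where
  carrier := {f | ∀ k, IsLift (A := S (k + 1)) (P := iterExpP S k) (f (k + 1)) (f k)}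
  one_mem' := fun _ => IsLift.one
  mul_mem' := fun hf hg k => IsLift.mul (hf k) (hg k)
  inv_mem' := fun hf k => IsLift.inv (hf k)

/-- Each finite level carries the discrete topology; the limit then carries the subspace
topology of the product topology, i.e. the usual profinite topology. -/
instance (S : ℕ → PermGroup) (k : ℕ) : TopologicalSpace ((iterExpP S k).grp) := ⊥

/-- The minimal number of generators of a group. -/
noncomputable def minGens (G : Type*) [Group G] : ℕ :=
  sInf {r | ∃ T : Finset G, T.card = r ∧ Subgroup.closure (T : Set G) = ⊤}
open Finset in
theorem tg_cyc {X : Type} [Finite X] (γ : Perm X) (x0 : X) (ρ : X → ℕ)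
    (hρ : Function.Injective ρ) (h0 : γ x0 = x0) :
    ∃ c : X → ℕ, c x0 = 0 ∧ (∀ x, ρ (γ x) < ρ x → c x = 0) ∧
      ∀ x, x ≠ x0 → ∑ j ∈ range (Function.minimalPeriod γ x), c ((γ ^ j) x) = 1 := by
  classical
  refine ⟨fun x => if x ≠ x0 ∧ ∀ y, γ.SameCycle x y → ρ x ≤ ρ y then 1 else 0, by simp, ?_, ?_⟩
  · intro x hx
    refine if_neg ?_
    rintro ⟨_, h⟩
    have := h (γ x) ⟨1, by simp⟩
    omega
  · intro x hx
    have hne : ∀ y, γ.SameCycle x y → y ≠ x0 := by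
      rintro y hy rfl
      obtain ⟨k, hk⟩ := hy.symm
      rw [Equiv.Perm.zpow_apply_eq_self_of_apply_eq_self h0] at hk
      exact hx hk.symm
    obtain ⟨z, hz, hzm⟩ := Set.exists_min_image {y | γ.SameCycle x y} ρ (Set.toFinite _)
      ⟨x, Equiv.Perm.SameCycle.refl _ _⟩
    have hzc : ∀ y, γ.SameCycle x y → ((y ≠ x0 ∧ ∀ y', γ.SameCycle y y' → ρ y ≤ ρ y') ↔ y = z) := by
      intro y hy
      constructor
      · rintro ⟨_, h⟩
        exact hρ (le_antisymm (h z (hy.symm.trans hz)) (hzm y hy))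
      · rintro rfl
        exact ⟨hne _ hy, fun y' h' => hzm y' (Equiv.Perm.SameCycle.trans hz h')⟩
    have hz' : γ.SameCycle x z := hz
    obtain ⟨k, hk⟩ := hz'.exists_nat_pow_eq
    have hpos : 0 < Function.minimalPeriod γ x := by
      apply Function.IsPeriodicPt.minimalPeriod_pos (n := orderOf γ) (orderOf_pos γ)
      unfold Function.IsPeriodicPt Function.IsFixedPt
      rw [← Equiv.Perm.coe_pow, pow_orderOf_eq_one]; rfl
    rw [Finset.sum_eq_single (k % Function.minimalPeriod γ x)]
    · refine if_pos ?_
      rw [hzc _ ⟨(k % Function.minimalPeriod γ x : ℕ), by rw [zpow_natCast]⟩, Equiv.Perm.coe_pow, Function.iterate_mod_minimalPeriod_eq, ← Equiv.Perm.coe_pow, hk]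
    · intro j hj hjk
      refine if_neg ?_
      rw [hzc _ ⟨j, by simp [zpow_natCast]⟩, ← hk]
      intro h
      apply hjk
      rw [Equiv.Perm.coe_pow, Equiv.Perm.coe_pow, ← Function.iterate_mod_minimalPeriod_eq (n := k)] at h
      exact Function.iterate_injOn_Iio_minimalPeriod (by simpa using hj) (by simpa using Nat.mod_lt _ hpos) h
    · intro h
      exact absurd (Finset.mem_range.2 (Nat.mod_lt _ hpos)) h

theorem tg_pow {M X : Type} (a : Perm M) (c : X → ℕ) (α : Perm X) (k : ℕ) :
    (prodPerm (fun i => a ^ c i) α) ^ k =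
      prodPerm (fun i => a ^ (∑ j ∈ Finset.range k, c (((α⁻¹) ^ j) i))) (α ^ k) := by
  induction k with
  | zero => simp [prodPerm_one]
  | succ k ih =>
    rw [pow_succ', ih, prodPerm_mul, ← pow_succ']
    congr 1
    funext i
    rw [Finset.sum_range_succ', ← pow_add, add_comm]
    simp [pow_succ]

theorem tg_sum_mul {X : Type} (γ : Perm X) (c : X → ℕ) (x : X) (l : ℕ) (hl : (γ ^ l) x = x)
    (h1 : ∑ j ∈ Finset.range l, c ((γ ^ j) x) = 1) (q : ℕ) :
    ∑ j ∈ Finset.range (l * q), c ((γ ^ j) x) = q := by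
  induction q with
  | zero => simp
  | succ q ih =>
    rw [Nat.mul_succ, Finset.sum_range_add, ih]
    congr 1
    rw [← h1]
    refine Finset.sum_congr rfl fun j _ => ?_
    congr 1
    rw [add_comm, pow_add, Perm.mul_apply, pow_mul, Equiv.Perm.pow_apply_eq_self_of_apply_eq_self hl]

/-- rank function of a spanning tree -/
theorem tg_rank {X : Type} [Finite X] (α β : Perm X) (B : Subgroup (Perm X))
    (hB : Subgroup.closure {α, β} = B) (ht : ∀ x y, ∃ σ ∈ B, σ x = y) (o : X) :
    ∃ ρ : X → ℕ, Function.Injective ρ ∧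
      ∀ x, x ≠ o → ρ (α⁻¹ x) < ρ x ∨ ρ (β⁻¹ x) < ρ x := by
  classical
  let R : ℕ → X → Prop := fun n => Nat.rec (fun x => x = o) (fun _ P x => P (α⁻¹ x) ∨ P (β⁻¹ x)) n
  have hR0 : ∀ x, R 0 x ↔ x = o := fun x => Iff.rfl
  have hRs : ∀ n x, R (n+1) x ↔ (R n (α⁻¹ x) ∨ R n (β⁻¹ x)) := fun n x => Iff.rfl
  have hcl : ∀ σ ∈ Submonoid.closure ({α, β} : Set (Perm X)), ∀ x, (∃ n, R n x) → ∃ n, R n (σ x) := by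
    intro σ hσ
    induction hσ using Submonoid.closure_induction with
    | mem g hg =>
      rintro x ⟨n, hn⟩
      rcases hg with rfl | rfl
      · exact ⟨n+1, (hRs _ _).2 (Or.inl (by simpa using hn))⟩
      · exact ⟨n+1, (hRs _ _).2 (Or.inr (by simpa using hn))⟩
    | one => intro x h; simpa using h
    | mul g g' _ _ h h' => intro x hx; exact h _ (h' _ hx)
  have hex : ∀ x, ∃ n, R n x := by
    intro x
    obtain ⟨σ, hσ, rfl⟩ := ht o x
    refine hcl σ ?_ o ⟨0, rfl⟩
    rw [← hB, ← Subgroup.mem_toSubmonoid, Subgroup.closure_toSubmonoid_of_finite] at hσ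
    exact hσ
  obtain ⟨d, hd1, hd2⟩ : ∃ d : X → ℕ, (∀ x, R (d x) x) ∧ ∀ x n, R n x → d x ≤ n :=
    ⟨fun x => sInf {n | R n x}, fun x => Nat.sInf_mem (s := {n | R n x}) (hex x),
      fun x n h => Nat.sInf_le (s := {n | R n x}) h⟩
  obtain ⟨n, ⟨e⟩⟩ := Finite.exists_equiv_fin X
  have key : ∀ x y, d y < d x → d y * n + e y < d x * n + e x := by
    intro x y h
    have h1 := (e y).2
    have h2 : (d y + 1) * n ≤ d x * n := Nat.mul_le_mul_right _ h
    rw [Nat.succ_mul] at h2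
    omega
  refine ⟨fun x => d x * n + e x, ?_, ?_⟩
  · intro x y h
    rcases lt_trichotomy (d x) (d y) with h1 | h1 | h1
    · exact absurd h (key _ _ h1).ne
    · simp only [h1] at h
      exact e.injective (Fin.ext (by omega))
    · exact absurd h (key _ _ h1).ne'
  · intro x hx
    have hs : R (d x) x := hd1 x
    rcases hd : d x with _ | k
    · rw [hd] at hs; exact absurd hs hx
    · rw [hd, hRs] at hs
      rcases hs with hs | hs
      · left; apply key
        have : d (α⁻¹ x) ≤ k := hd2 _ _ hs
        omega
      · right; apply key
        have : d (β⁻¹ x) ≤ k := hd2 _ _ hs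
        omega

theorem tg_perf {M : Type} (A K : Subgroup (Perm M)) (hp : commutator A = ⊤)
    (h : ∀ s ∈ A, ∀ t ∈ A, s * t * s⁻¹ * t⁻¹ ∈ K) : A ≤ K := by
  have : commutator A ≤ K.subgroupOf A := by
    rw [commutator_def, Subgroup.commutator_le]
    intro s _ t _
    rw [Subgroup.mem_subgroupOf, commutatorElement_def]
    exact h s s.2 t t.2
  rw [hp] at this
  intro s hs
  exact Subgroup.mem_subgroupOf.1 (this (Subgroup.mem_top (⟨s, hs⟩ : A)))

/-- exponent argument: the cycle products generate -/
theorem tg_exp {M X : Type} [Finite X] [Nontrivial X] (a : Perm M) (α : Perm X) (x0 : X)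
    (h0 : α x0 = x0)
    (K : Subgroup (Perm M))
    (h : ∀ x, x ≠ x0 → a ^ (orderOf α / Function.minimalPeriod (α⁻¹ : Perm X) x) ∈ K) : a ∈ K := by
  set r := orderOf α with hr
  have hrpos : 0 < r := orderOf_pos α
  have hper : ∀ x, Function.minimalPeriod (α⁻¹ : Perm X) x ∣ r := by
    intro x
    apply Function.IsPeriodicPt.minimalPeriod_dvd
    unfold Function.IsPeriodicPt Function.IsFixedPt
    rw [← Equiv.Perm.coe_pow, hr, ← orderOf_inv, pow_orderOf_eq_one]; rfl
  -- subgroup of exponents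
  let E : AddSubgroup ℤ := (K.comap (zpowersHom (Perm M) a)).toAddSubgroup'
  have hE : ∀ k : ℤ, k ∈ E ↔ a ^ k ∈ K := fun k => Iff.rfl
  obtain ⟨d, hd⟩ := Int.subgroup_cyclic E
  have hdvd : ∀ k : ℤ, k ∈ E ↔ d ∣ k := by
    intro k; rw [hd, AddSubgroup.mem_closure_singleton]
    simp [dvd_def, eq_comm, mul_comm]
  have h1 : ∀ x, x ≠ x0 → d.natAbs ∣ r / Function.minimalPeriod (α⁻¹ : Perm X) x := by
    intro x hx
    rw [← Int.natCast_dvd_natCast, Int.natAbs_dvd, ← hdvd, hE, zpow_natCast]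
    exact h x hx
  obtain ⟨x1, hx1⟩ := exists_ne x0
  have hdr : d.natAbs ∣ r := (h1 x1 hx1).trans (Nat.div_dvd_of_dvd (hper x1))
  obtain ⟨q, hq⟩ := hdr
  have hdpos : 0 < d.natAbs := Nat.pos_of_ne_zero (by rintro h; simp [h] at hq; omega)
  have hone : (α⁻¹) ^ q = 1 := by
    ext x
    by_cases hx : x = x0
    · subst hx
      rw [Equiv.Perm.pow_apply_eq_self_of_apply_eq_self]; rfl
      rw [Perm.inv_eq_iff_eq]; exact h0.symm
    · have h2 : Function.minimalPeriod (α⁻¹ : Perm X) x ∣ q := by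
        obtain ⟨t, ht⟩ := h1 x hx
        have h3 := Nat.div_mul_cancel (hper x)
        rw [ht, hq, mul_assoc] at h3
        have h4 := Nat.eq_of_mul_eq_mul_left hdpos h3
        exact ⟨t, by rw [← h4, mul_comm]⟩
      rw [Equiv.Perm.coe_pow]
      exact Function.isPeriodicPt_iff_minimalPeriod_dvd.2 h2
  have h5 : r ∣ q := by
    rw [hr, ← orderOf_inv]; exact orderOf_dvd_of_pow_eq_one hone
  have hqpos : 0 < q := Nat.pos_of_ne_zero (by rintro rfl; simp at hq; omega)
  have h6 := Nat.le_of_dvd hqpos h5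
  have h7 : d.natAbs = 1 := by nlinarith
  have : (1 : ℤ) ∈ E := by rw [hdvd, ← Int.natAbs_dvd, h7]; simp
  simpa using (hE 1).1 this

theorem tg_conj {M X : Type} (H : Subgroup (Perm (X → M))) {F f : X → Perm M} {σ τ : Perm X}
    (h : prodPerm F σ ∈ H) (h' : prodPerm f τ ∈ H) :
    prodPerm (fun i => (F (σ i))⁻¹ * f (σ i) * F (τ⁻¹ (σ i))) (σ⁻¹ * τ * σ) ∈ H := by
  have := H.mul_mem (H.mul_mem (H.inv_mem h) h') h
  rw [prodPerm_inv, prodPerm_mul, prodPerm_mul] at this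
  convert this using 2
  simp

theorem tg_conj' {M X : Type} (H : Subgroup (Perm (X → M))) {F f : X → Perm M} {σ τ : Perm X}
    (h : prodPerm F σ ∈ H) (h' : prodPerm f τ ∈ H) :
    prodPerm (fun i => F i * f (σ⁻¹ i) * (F (σ (τ⁻¹ (σ⁻¹ i))))⁻¹) (σ * τ * σ⁻¹) ∈ H := by
  have := H.mul_mem (H.mul_mem h h') (H.inv_mem h)
  rw [prodPerm_inv, prodPerm_mul, prodPerm_mul] at this
  convert this using 2
  simp

/-- base hom -/
def tgBase (M X : Type) : (X → Perm M) →* Perm (X → M) where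
  toFun f := prodPerm f 1
  map_one' := prodPerm_one
  map_mul' f g := by rw [prodPerm_mul]; congr 1

theorem tgBase_apply {M X : Type} (f : X → Perm M) : tgBase M X f = prodPerm f 1 := rfl

/-- values at `x` of elements of the base part trivial on `T` -/
def tgL {M X : Type} (H : Subgroup (Perm (X → M))) (T : Set X) (x : X) : Subgroup (Perm M) where
  carrier := {s | ∃ f, prodPerm f 1 ∈ H ∧ (∀ y ∈ T, f y = 1) ∧ f x = s}
  one_mem' := ⟨fun _ => 1, by rw [prodPerm_one]; exact H.one_mem, fun _ _ => rfl, rfl⟩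
  mul_mem' := by
    rintro s t ⟨f, hf, hf', rfl⟩ ⟨g, hg, hg', rfl⟩
    refine ⟨f * g, ?_, fun y hy => by simp [hf' y hy, hg' y hy], rfl⟩
    rw [← tgBase_apply, map_mul]
    exact H.mul_mem hf hg
  inv_mem' := by
    rintro s ⟨f, hf, hf', rfl⟩
    refine ⟨f⁻¹, ?_, fun y hy => by simp [hf' y hy], rfl⟩
    rw [← tgBase_apply, map_inv]
    exact H.inv_mem hf

theorem mem_tgL {M X : Type} {H : Subgroup (Perm (X → M))} {T : Set X} {x : X} {s : Perm M} :
    s ∈ tgL H T x ↔ ∃ f, prodPerm f 1 ∈ H ∧ (∀ y ∈ T, f y = 1) ∧ f x = s := Iff.rfl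

theorem tgL_norm {M X : Type} {H : Subgroup (Perm (X → M))} {T : Set X} {x : X} {s w : Perm M}
    (hw : w ∈ tgL H ∅ x) (hs : s ∈ tgL H T x) : w * s * w⁻¹ ∈ tgL H T x := by
  obtain ⟨F, hF, -, rfl⟩ := hw
  obtain ⟨f, hf, hf', rfl⟩ := hs
  have := tg_conj' H hF hf
  simp only [inv_one, mul_one, Perm.one_apply] at this
  exact ⟨_, this, fun y hy => by simp [hf' y hy], rfl⟩

theorem tg_link {M X : Type} (H : Subgroup (Perm (X → M))) (A : Subgroup (Perm M))
    (hN : ∀ x, A ≤ tgL H ∅ x) {x y : X} {F S : X → Perm M} {σ α : Perm X} {a : Perm M}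
    (hF : prodPerm F σ ∈ H) (hFA : ∀ i, F i ∈ A) (hS : prodPerm S α ∈ H)
    (hαx : α (σ x) = σ x) (hαy : α (σ y) = σ y) (hSx : S (σ x) = a) (hSy : S (σ y) = 1)
    {s : Perm M} (hs : s ∈ A) : s * a * s⁻¹ * a⁻¹ ∈ tgL H {y} x := by
  have hαx' : α⁻¹ (σ x) = σ x := by rw [Perm.inv_eq_iff_eq]; exact hαx.symm
  have hαy' : α⁻¹ (σ y) = σ y := by rw [Perm.inv_eq_iff_eq]; exact hαy.symm
  set w := F (σ x) with hw
  have hwA : w ∈ A := hFA _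
  obtain ⟨f, hf, -, hfx⟩ := hN x (A.mul_mem (A.mul_mem (A.inv_mem hwA) hs) hwA)
  have h1 := tg_conj H hF hS
  obtain ⟨G, hG⟩ : ∃ G : X → Perm M, G = fun i => (F (σ i))⁻¹ * S (σ i) * F (α⁻¹ (σ i)) := ⟨_, rfl⟩
  obtain ⟨τ, hτ⟩ : ∃ τ, τ = σ⁻¹ * α * σ := ⟨_, rfl⟩
  rw [← hG, ← hτ] at h1
  have hGx : G x = w⁻¹ * a * w := by rw [hG]; simp only [hαx', hSx, hw]
  have hGy : G y = 1 := by rw [hG]; simp [hαy', hSy]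
  have hτx : τ⁻¹ x = x := by rw [Perm.inv_eq_iff_eq, hτ]; simp [hαx]
  have hτy : τ⁻¹ y = y := by rw [Perm.inv_eq_iff_eq, hτ]; simp [hαy]
  have hτx2 : τ x = x := (Perm.inv_eq_iff_eq.1 hτx).symm
  have hτy2 : τ y = y := (Perm.inv_eq_iff_eq.1 hτy).symm
  have hf' : prodPerm (fun i => (f i)⁻¹) 1 ∈ H := by
    have := H.inv_mem hf
    rw [prodPerm_inv] at this
    simpa using this
  have h2 := H.mul_mem hf (tg_conj' H h1 hf')
  rw [prodPerm_mul] at h2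
  simp only [inv_one, mul_one, Perm.one_apply, mul_inv_cancel] at h2
  have h3 : (w⁻¹ * s * w) * (w⁻¹ * a * w * (w⁻¹ * s * w)⁻¹ * (w⁻¹ * a * w)⁻¹) ∈ tgL H {y} x :=
    ⟨_, h2, by
      rintro _ rfl
      simp only [hGy, hτy, hτy2]; group, by simp only [hGx, hτx, hτx2, hfx]⟩
  have h4 := tgL_norm (hN x hwA) h3
  convert h4 using 1
  group

theorem tg_pair {M : Type} (A K : Subgroup (Perm M)) (a b : Perm M)
    (hA : Subgroup.closure {a, b} = A) (hp : commutator A = ⊤)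
    (hn : ∀ w ∈ A, ∀ s ∈ K, w * s * w⁻¹ ∈ K)
    (ha : ∀ s ∈ A, s * a * s⁻¹ * a⁻¹ ∈ K) (hb : ∀ s ∈ A, s * b * s⁻¹ * b⁻¹ ∈ K) : A ≤ K := by
  refine tg_perf A K hp ?_
  intro s hs t ht
  have key : ∀ t ∈ A, t ∈ A ∧ ∀ s ∈ A, s * t * s⁻¹ * t⁻¹ ∈ K := by
    intro t ht
    refine ⟨ht, ?_⟩
    rw [← hA] at ht
    induction ht using Subgroup.closure_induction with
    | mem x hx =>
      rcases hx with rfl | rfl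
      · exact ha
      · exact hb
    | one => intro s _; simp [K.one_mem]
    | mul x y hx hy ih ih' =>
      intro s hs
      rw [hA] at hx hy
      have := K.mul_mem (ih s hs) (hn x hx _ (ih' s hs))
      convert this using 1
      group
    | inv x hx ih =>
      intro s hs
      rw [hA] at hx
      have := hn _ (A.inv_mem hx) _ (K.inv_mem (ih s hs))
      convert this using 1
      group
  exact (key t ht).2 s hs

theorem tg_main {M X : Type} [Finite X] [Nontrivial X] (A : Subgroup (Perm M))
    (B : Subgroup (Perm X)) (a b : Perm M) (α β : Perm X)
    (hA : Subgroup.closure {a, b} = A) (hp : commutator A = ⊤)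
    (hB : Subgroup.closure {α, β} = B) (ht : ∀ x y, ∃ σ ∈ B, σ x = y) (x0 y0 : X)
    (hx0 : α x0 = x0) (hy0 : β y0 = y0) :
    ∃ c c' : X → ℕ, Subgroup.closure {prodPerm (fun i => a ^ c i) α, prodPerm (fun i => b ^ c' i) β}
      = expWr A B := by
  classical
  have haA : a ∈ A := hA ▸ Subgroup.subset_closure (by simp)
  have hbA : b ∈ A := hA ▸ Subgroup.subset_closure (by simp)
  have hαB : α ∈ B := hB ▸ Subgroup.subset_closure (by simp)
  have hβB : β ∈ B := hB ▸ Subgroup.subset_closure (by simp)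
  have hx0' : α⁻¹ x0 = x0 := by rw [Perm.inv_eq_iff_eq]; exact hx0.symm
  have hy0' : β⁻¹ y0 = y0 := by rw [Perm.inv_eq_iff_eq]; exact hy0.symm
  obtain ⟨ρ, hρ, hρt⟩ := tg_rank α β B hB ht x0
  obtain ⟨c, hc0, hcρ, hc⟩ := tg_cyc α⁻¹ x0 ρ hρ hx0'
  obtain ⟨c', hc0', hcρ', hc'⟩ := tg_cyc β⁻¹ y0 ρ hρ hy0'
  refine ⟨c, c', ?_⟩
  set H := Subgroup.closure {prodPerm (fun i => a ^ c i) α, prodPerm (fun i => b ^ c' i) β} with hH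
  have hg1 : prodPerm (fun i => a ^ c i) α ∈ H := Subgroup.subset_closure (by simp)
  have hg2 : prodPerm (fun i => b ^ c' i) β ∈ H := Subgroup.subset_closure (by simp)
  have mulP : ∀ {f f' : X → Perm M} {σ σ' : Perm X}, prodPerm f σ ∈ H → prodPerm f' σ' ∈ H →
      prodPerm (fun i => f i * f' (σ⁻¹ i)) (σ * σ') ∈ H := by
    intro f f' σ σ' h h'
    rw [← prodPerm_mul]; exact H.mul_mem h h'
  have invP : ∀ {f : X → Perm M} {σ : Perm X}, prodPerm f σ ∈ H →
      prodPerm (fun i => (f (σ i))⁻¹) σ⁻¹ ∈ H := by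
    intro f σ h
    rw [← prodPerm_inv]; exact H.inv_mem h
  -- spanning tree
  have tree : ∀ n x, ρ x = n → ∃ f σ, prodPerm f σ ∈ H ∧ σ x0 = x ∧ f x = 1 := by
    intro n
    induction n using Nat.strong_induction_on with
    | _ n ih =>
      intro x hx
      by_cases hx0e : x = x0
      · exact ⟨fun _ => 1, 1, by rw [prodPerm_one]; exact H.one_mem, by simp [hx0e], rfl⟩
      · rcases hρt x hx0e with h | h
        · obtain ⟨f, σ, hf, hσ, hf1⟩ := ih _ (hx ▸ h) _ rfl
          exact ⟨_, _, mulP hg1 hf, by simp [hσ], by simp only [hf1, hcρ x h, pow_zero, mul_one]⟩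
        · obtain ⟨f, σ, hf, hσ, hf1⟩ := ih _ (hx ▸ h) _ rfl
          exact ⟨_, _, mulP hg2 hf, by simp [hσ], by simp only [hf1, hcρ' x h, pow_zero, mul_one]⟩
  have lift : ∀ σ ∈ B, ∃ f, (∀ i, f i ∈ A) ∧ prodPerm f σ ∈ H := by
    intro σ hσ
    rw [← hB] at hσ
    induction hσ using Subgroup.closure_induction with
    | mem x hx =>
      rcases hx with rfl | rfl
      · exact ⟨_, fun i => A.pow_mem haA _, hg1⟩
      · exact ⟨_, fun i => A.pow_mem hbA _, hg2⟩
    | one => exact ⟨fun _ => 1, fun _ => A.one_mem, by rw [prodPerm_one]; exact H.one_mem⟩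
    | mul x y hx hy ih ih' =>
      obtain ⟨f, hf, hf'⟩ := ih
      obtain ⟨g, hg, hg'⟩ := ih'
      exact ⟨_, fun i => A.mul_mem (hf _) (hg _), mulP hf' hg'⟩
    | inv x hx ih =>
      obtain ⟨f, hf, hf'⟩ := ih
      exact ⟨_, fun i => A.inv_mem (hf _), invP hf'⟩
  have toRoot : ∀ x s, s ∈ tgL H ∅ x → s ∈ tgL H ∅ x0 := by
    rintro x s ⟨f, hf, -, rfl⟩
    obtain ⟨F, σ, hF, hσ, hF1⟩ := tree _ x rfl
    have := tg_conj H hF hf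
    rw [mul_one, inv_mul_cancel] at this
    exact ⟨_, this, by simp, by simp [hσ, hF1]⟩
  have fromRoot : ∀ x s, s ∈ tgL H ∅ x0 → s ∈ tgL H ∅ x := by
    rintro x s ⟨f, hf, -, rfl⟩
    obtain ⟨F, σ, hF, hσ, hF1⟩ := tree _ x rfl
    have := tg_conj' H hF hf
    rw [mul_one, mul_inv_cancel] at this
    have hσ' : σ⁻¹ x = x0 := by rw [Perm.inv_eq_iff_eq]; exact hσ.symm
    exact ⟨_, this, by simp, by simp [hσ', hF1, hσ]⟩
  -- general cycle facts
  have gen : ∀ (g : Perm M) (δ : Perm X) (e : X → ℕ) (z0 : X), δ z0 = z0 →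
      (∀ x, x ≠ z0 → ∑ j ∈ Finset.range (Function.minimalPeriod (δ⁻¹ : Perm X) x),
        e (((δ⁻¹) ^ j) x) = 1) →
      prodPerm (fun i => g ^ e i) δ ∈ H → g ∈ tgL H ∅ x0 := by
    intro g δ e z0 hz0 he hg
    refine tg_exp g δ z0 hz0 _ ?_
    intro x hx
    refine toRoot x _ ?_
    have h1 := H.pow_mem hg (orderOf δ)
    rw [tg_pow, pow_orderOf_eq_one] at h1
    refine ⟨_, h1, by simp, ?_⟩
    refine congrArg (g ^ ·) ?_
    have hper : Function.minimalPeriod (δ⁻¹ : Perm X) x ∣ orderOf δ := by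
      apply Function.IsPeriodicPt.minimalPeriod_dvd
      unfold Function.IsPeriodicPt Function.IsFixedPt
      rw [← Equiv.Perm.coe_pow, ← orderOf_inv, pow_orderOf_eq_one]; rfl
    have h2 := tg_sum_mul δ⁻¹ e x _ (by
      rw [Equiv.Perm.coe_pow]; exact Function.iterate_minimalPeriod) (he x hx)
      (orderOf δ / Function.minimalPeriod (δ⁻¹ : Perm X) x)
    rw [Nat.mul_div_cancel' hper] at h2
    exact h2
  have hN : ∀ x, A ≤ tgL H ∅ x := by
    intro x s hs
    refine fromRoot x s ?_
    have : A ≤ tgL H ∅ x0 := by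
      rw [← hA, Subgroup.closure_le]
      rintro _ (rfl | rfl)
      · exact gen _ _ _ _ hx0 hc hg1
      · exact gen _ _ _ _ hy0 hc' hg2
    exact this hs
  have gen2 : ∀ (g : Perm M) (δ : Perm X) (e : X → ℕ) (z0 : X), δ z0 = z0 → e z0 = 0 →
      (∀ x, x ≠ z0 → ∑ j ∈ Finset.range (Function.minimalPeriod (δ⁻¹ : Perm X) x),
        e (((δ⁻¹) ^ j) x) = 1) →
      prodPerm (fun i => g ^ e i) δ ∈ H → ∀ x y, x ≠ y → ∀ s ∈ A,
        s * g * s⁻¹ * g⁻¹ ∈ tgL H {y} x := by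
    intro g δ e z0 hz0 hez0 he hg x y hxy s hs
    obtain ⟨σ, hσ, hσy⟩ := ht y z0
    obtain ⟨F, hFA, hF⟩ := lift σ hσ
    have hz : σ x ≠ z0 := by
      rw [← hσy]; exact fun h => hxy (σ.injective h)
    have hz0' : δ⁻¹ z0 = z0 := by rw [Perm.inv_eq_iff_eq]; exact hz0.symm
    have h1 := H.pow_mem hg (Function.minimalPeriod (δ⁻¹ : Perm X) (σ x))
    rw [tg_pow] at h1
    refine tg_link H A hN hF hFA h1 ?_ ?_ ?_ ?_ hs
    · have h3 : ((δ⁻¹ : Perm X) ^ (Function.minimalPeriod (δ⁻¹ : Perm X) (σ x))) (σ x) = σ x := by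
        rw [Equiv.Perm.coe_pow]; exact Function.iterate_minimalPeriod
      rw [inv_pow, Perm.inv_eq_iff_eq] at h3
      exact h3.symm
    · rw [hσy]; exact Equiv.Perm.pow_apply_eq_self_of_apply_eq_self hz0 _
    · simp only [he _ hz, pow_one]
    · simp only [hσy, Equiv.Perm.pow_apply_eq_self_of_apply_eq_self hz0', hez0]
      simp
  have hL2 : ∀ x y, x ≠ y → A ≤ tgL H {y} x := by
    intro x y hxy
    refine tg_pair A _ a b hA hp (fun w hw s hs => tgL_norm (hN x hw) hs) ?_ ?_
    · exact gen2 _ _ _ _ hx0 hc0 hc hg1 x y hxy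
    · exact gen2 _ _ _ _ hy0 hc0' hc' hg2 x y hxy
  have hLT : ∀ x, ∀ T : Set X, T.Finite → x ∉ T → A ≤ tgL H T x := by
    intro x T hT
    induction T, hT using Set.Finite.induction_on with
    | empty => intro _; exact hN x
    | @insert y T hy _ ih =>
      intro hx
      have hxy : x ≠ y := fun h => hx (by simp [h])
      have hxT : x ∉ T := fun h => hx (by simp [h])
      refine tg_perf A _ hp ?_
      intro s hs t ht
      obtain ⟨f, hf, hfT, hfx⟩ := ih hxT hs
      obtain ⟨g, hg, hgT, hgx⟩ := hL2 x y hxy ht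
      refine ⟨f * g * f⁻¹ * g⁻¹, ?_, ?_, ?_⟩
      · rw [← tgBase_apply] at hf hg ⊢
        simp only [map_mul, map_inv]
        exact H.mul_mem (H.mul_mem (H.mul_mem hf hg) (H.inv_mem hf)) (H.inv_mem hg)
      · intro z hz
        rcases hz with rfl | hz
        · simp [hgT z rfl]
        · simp [hfT z hz]
      · simp [hfx, hgx]
  have hsingle : ∀ x, ∀ s ∈ A, prodPerm (Pi.mulSingle x s) 1 ∈ H := by
    intro x s hs
    obtain ⟨f, hf, hfT, hfx⟩ := hLT x {y | y ≠ x} (Set.toFinite _) (by simp) hs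
    convert hf using 2
    funext y
    by_cases h : y = x
    · subst h; simp [hfx]
    · rw [Pi.mulSingle_eq_of_ne h, hfT y h]
  have hbase : ∀ f : X → Perm M, (∀ i, f i ∈ A) → prodPerm f 1 ∈ H := by
    intro f hf
    have : f ∈ H.comap (tgBase M X) := by
      apply Subgroup.pi_mem_of_mulSingle_mem
      intro i
      exact hsingle i _ (hf i)
    exact this
  apply le_antisymm
  · rw [hH, Subgroup.closure_le]
    rintro _ (rfl | rfl)
    · exact ⟨_, _, fun i => A.pow_mem haA _, hαB, rfl⟩
    · exact ⟨_, _, fun i => A.pow_mem hbA _, hβB, rfl⟩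
  · rintro _ ⟨f, σ, hf, hσ, rfl⟩
    obtain ⟨g, hgA, hg⟩ := lift σ hσ
    have h1 := hbase (fun i => f i * (g i)⁻¹) (fun i => A.mul_mem (hf i) (A.inv_mem (hgA i)))
    have h2 := mulP h1 hg
    simpa using h2

theorem tg_main' {M X : Type} [Finite X] (A : Subgroup (Perm M))
    (B : Subgroup (Perm X)) (a b : Perm M) (α β : Perm X)
    (hA : Subgroup.closure {a, b} = A) (hp : commutator A = ⊤)
    (hB : Subgroup.closure {α, β} = B) (ht : ∀ x y, ∃ σ ∈ B, σ x = y) (x0 y0 : X)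
    (hx0 : α x0 = x0) (hy0 : β y0 = y0) :
    ∃ c c' : X → ℕ, Subgroup.closure {prodPerm (fun i => a ^ c i) α, prodPerm (fun i => b ^ c' i) β}
      = expWr A B := by
  rcases subsingleton_or_nontrivial X with hX | hX
  · refine ⟨fun _ => 1, fun _ => 1, ?_⟩
    have h1 : ∀ σ : Perm X, σ = 1 := fun σ => Subsingleton.elim _ _
    rw [h1 α, h1 β]
    simp only [pow_one]
    let φ : Perm M →* Perm (X → M) := (tgBase M X).comp (Pi.constMonoidHom X (Perm M))
    have h2 : ({prodPerm (fun _ => a) 1, prodPerm (fun _ => b) 1} : Set (Perm (X → M)))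
        = φ '' {a, b} := by
      rw [Set.image_pair]; rfl
    rw [h2, ← MonoidHom.map_closure, hA]
    ext π
    constructor
    · rintro ⟨s, hs, rfl⟩
      exact ⟨fun _ => s, 1, fun _ => hs, B.one_mem, rfl⟩
    · rintro ⟨f, σ, hf, hσ, rfl⟩
      refine ⟨f x0, hf x0, ?_⟩
      rw [h1 σ]
      change prodPerm (fun _ => f x0) 1 = _
      congr 1
      funext i
      rw [Subsingleton.elim i x0]
  · exact tg_main A B a b α β hA hp hB ht x0 y0 hx0 hy0

/-- **Lemma (two generators, finite case).** -/
theorem iter_twoGen (n : ℕ) (m : ℕ → ℕ)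
    (S : ∀ k, Subgroup (Perm (Fin (m k))))
    (a b : ∀ k, Perm (Fin (m k)))
    (htrans : ∀ k, k ≤ n → ∀ x y : Fin (m k), ∃ σ ∈ S k, σ x = y)
    (hperf : ∀ k, k ≤ n → commutator (S k) = ⊤)
    (hab : ∀ k, k ≤ n → Subgroup.closure {a k, b k} = S k)
    (hfix : ∀ k, k ≤ n → (∃ x, a k x = x) ∧ (∃ x, b k x = x))
    (hcop : ∀ j, 1 ≤ j → j ≤ n →
      Nat.Coprime (orderOf (a 0)) (orderOf (b j)) ∧
      Nat.Coprime (orderOf (b 0)) (orderOf (a j))) :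
    ∃ g₁ g₂ : Perm ((iterExpP (fun k => ⟨Fin (m k), S k⟩) n).carrier),
      Subgroup.closure {g₁, g₂} = (iterExpP (fun k => ⟨Fin (m k), S k⟩) n).grp := by
  have key : ∀ k, k ≤ n → Finite (iterExpP (fun k => ⟨Fin (m k), S k⟩) k).carrier ∧
      (∀ x y : (iterExpP (fun k => ⟨Fin (m k), S k⟩) k).carrier,
        ∃ σ ∈ (iterExpP (fun k => ⟨Fin (m k), S k⟩) k).grp, σ x = y) ∧
      ∃ g₁ g₂ : Perm ((iterExpP (fun k => ⟨Fin (m k), S k⟩) k).carrier),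
        Subgroup.closure {g₁, g₂} = (iterExpP (fun k => ⟨Fin (m k), S k⟩) k).grp ∧
        (∃ x, g₁ x = x) ∧ (∃ x, g₂ x = x) := by
    intro k
    induction k with
    | zero =>
      intro hk
      exact ⟨inferInstanceAs (Finite (Fin (m 0))), htrans 0 hk, a 0, b 0, hab 0 hk, hfix 0 hk⟩
    | succ k ih =>
      intro hk
      obtain ⟨hfin, htr, g₁, g₂, hg, ⟨x, hx⟩, ⟨y, hy⟩⟩ := ih (by omega)
      obtain ⟨c, c', hcc⟩ := tg_main' (S (k+1)) _ (a (k+1)) (b (k+1)) g₁ g₂ (hab _ hk)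
        (hperf _ hk) hg htr x y hx hy
      obtain ⟨⟨p, hpp⟩, ⟨q, hqq⟩⟩ := hfix _ hk
      refine ⟨?_, ?_, _, _, hcc, ⟨fun _ => p, ?_⟩, ⟨fun _ => q, ?_⟩⟩
      · exact inferInstanceAs
          (Finite ((iterExpP (fun k => ⟨Fin (m k), S k⟩) k).carrier → Fin (m (k+1))))
      · intro u v
        choose f hf hf' using fun i => htrans (k+1) hk (u i) (v i)
        refine ⟨prodPerm f 1, ⟨f, 1, hf, Subgroup.one_mem _, rfl⟩, ?_⟩
        funext i
        exact hf' i
      · funext i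
        exact Equiv.Perm.pow_apply_eq_self_of_apply_eq_self hpp _
      · funext i
        exact Equiv.Perm.pow_apply_eq_self_of_apply_eq_self hqq _
  obtain ⟨-, -, g₁, g₂, hg, -⟩ := key n le_rfl
  exact ⟨g₁, g₂, hg⟩
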